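/- Let E be a finite-dimensional real inner product space, n ≥ 1, and ω₁, …, ωₙ : E → E l-Lipschitz maps whose average ν = (1/n)·Σᵢ ωᵢ is μ-strongly monotone with 0 < μ ≤ l; let z* be the unique root of ν, σ*² = (1/n)·Σᵢ ‖ωᵢ(z*)‖², and κ = l/μ. Fix z₀ ∈ E and K ≥ 1, and assume ‖ν(z₀)‖·n^{1/2}·K ≥ e·μ. Set α = min{ μ/(5nl²), (2/(μnK))·log(‖ν(z₀)‖·n^{1/2}·K/μ) }. Then, averaging over all (n!)^K K-tuples of permutations of {1,…,n} (Random Reshuffling), the GDA-without-replacement output after K epochs satisfies (1/(n!)^K)·Σ_τ ‖z^{K+1}₀(τ) − z*‖² ≤ 2·e^{−K/(5κ²)}·‖z₀ − z*‖² + (2μ² + 8κ²σ*²·log³(‖ν(z₀)‖·n^{1/2}·K/μ)) / (μ²·n·K²). -/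

import Mathlib

open scoped RealInnerProductSpace

/-- Iterates within one epoch of GDA without replacement. -/
noncomputable def gdaStep {E : Type*} [NormedAddCommGroup E] [NormedSpace ℝ E] {n : ℕ}
    (ω : Fin n → E → E) (α : ℝ) (τ : Equiv.Perm (Fin n)) (z : E) : ℕ → E
  | 0 => z
  | i + 1 =>
    let w := gdaStep ω α τ z i
    if h : i < n then w - α • ω (τ ⟨i, h⟩) w else w

/-- Epoch iterates of GDA without replacement. -/
noncomputable def gdaEpochs {E : Type*} [NormedAddCommGroup E] [NormedSpace ℝ E] {n : ℕ}
    (ω : Fin n → E → E) (α : ℝ) (τs : ℕ → Equiv.Perm (Fin n)) (z0 : E) : ℕ → E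
  | 0 => z0
  | k + 1 => gdaStep ω α (τs k) (gdaEpochs ω α τs z0 k) n

open scoped BigOperators

/-!
A permutation samples the population `ω i zs`, which is centred since `∑ i, ω i zs = 0`, without
replacement. Two distinct draws are negatively correlated, so a partial sum of `m` draws has mean
square at most `m` times the variance.

One epoch is a full step `z - α • ∑ i, ω i z` up to a drift error, because every `ω i` is visited
exactly once. The full step contracts towards `zs` by strong monotonicity, while the drift inside
the epoch is governed by `‖z - zs‖` and by the partial sums above. Squaring and averaging over the
permutation gives an affine recursion `V ↦ (1 - n α μ) V + (1 - (1 - n α μ)) B`, hence after `K`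
epochs the bound `exp (-K n α μ) V + B`.

Finally `exp (-min a b) ≤ exp (-a) + exp (-b)` separates the two branches of the step size: the
logarithmic branch contributes `(‖ν z0‖ √n K / μ)⁻² ‖z0 - zs‖²`, which is at most `1 / (n K²)`
because `μ ‖z0 - zs‖ ≤ ‖ν z0‖`.
-/

section Sampling

open Finset

variable {ι : Type*} [Fintype ι] [DecidableEq ι]

lemma expect_perm_apply {M : Type*} [AddCommMonoid M] [Module ℚ≥0 M] (f : ι → M) (j : ι) :
    𝔼 τ : Equiv.Perm ι, f (τ j) = 𝔼 i, f i := by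
  have : Nonempty ι := ⟨j⟩
  have hswap (k : ι) : 𝔼 τ : Equiv.Perm ι, f (τ k) = 𝔼 τ : Equiv.Perm ι, f (τ j) :=
    Fintype.expect_equiv (Equiv.mulRight (Equiv.swap k j)) _ _ fun τ => by simp
  calc 𝔼 τ : Equiv.Perm ι, f (τ j)
      = 𝔼 k, 𝔼 τ : Equiv.Perm ι, f (τ k) := by simp only [hswap, Fintype.expect_const]
    _ = 𝔼 τ : Equiv.Perm ι, 𝔼 k, f (τ k) := expect_comm _ _ _
    _ = 𝔼 _τ : Equiv.Perm ι, 𝔼 i, f i :=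
        expect_congr rfl fun τ _ => Fintype.expect_equiv τ _ _ fun _ => rfl
    _ = 𝔼 i, f i := Fintype.expect_const _

variable {E : Type*} [NormedAddCommGroup E] [InnerProductSpace ℝ E]

lemma expect_perm_inner_nonpos {a : ι → E} (ha : ∑ i, a i = 0) {j k : ι} (hjk : j ≠ k) :
    𝔼 τ : Equiv.Perm ι, ⟪a (τ j), a (τ k)⟫ ≤ 0 := by
  have hswap : ∀ m ∈ univ.erase j, 𝔼 τ : Equiv.Perm ι, ⟪a (τ j), a (τ m)⟫
      = 𝔼 τ : Equiv.Perm ι, ⟪a (τ j), a (τ k)⟫ := fun m hm =>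
    Fintype.expect_equiv (Equiv.mulRight (Equiv.swap m k)) _ _ fun τ => by
      simp [Equiv.swap_apply_of_ne_of_ne (ne_of_mem_erase hm).symm hjk]
  have hsum : ∑ m, 𝔼 τ : Equiv.Perm ι, ⟪a (τ j), a (τ m)⟫ = 0 := by
    rw [← expect_sum_comm]
    refine expect_eq_zero fun τ _ => ?_
    rw [← inner_sum, Equiv.sum_comp τ a, ha, inner_zero_right]
  rw [← add_sum_erase univ _ (mem_univ j), sum_congr rfl hswap, sum_const, nsmul_eq_mul] at hsum
  have hdiag : 0 ≤ 𝔼 τ : Equiv.Perm ι, ⟪a (τ j), a (τ j)⟫ :=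
    expect_nonneg fun τ _ => real_inner_self_nonneg
  have hcard : (0 : ℝ) < #(univ.erase j) :=
    Nat.cast_pos.2 (card_pos.2 ⟨k, mem_erase.2 ⟨hjk.symm, mem_univ k⟩⟩)
  exact nonpos_of_mul_nonpos_right (by linarith) hcard

lemma expect_perm_norm_sum_sq_le {a : ι → E} (ha : ∑ i, a i = 0) (s : Finset ι) :
    𝔼 τ : Equiv.Perm ι, ‖∑ j ∈ s, a (τ j)‖ ^ 2 ≤ #s * 𝔼 i, ‖a i‖ ^ 2 := by
  have hexpand (τ : Equiv.Perm ι) :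
      ‖∑ j ∈ s, a (τ j)‖ ^ 2 = ∑ j ∈ s, ∑ k ∈ s, ⟪a (τ j), a (τ k)⟫ := by
    rw [← real_inner_self_eq_norm_sq, sum_inner]
    simp only [inner_sum]
  have hrow : ∀ j ∈ s, 𝔼 τ : Equiv.Perm ι, ∑ k ∈ s, ⟪a (τ j), a (τ k)⟫
      ≤ 𝔼 i, ‖a i‖ ^ 2 := fun j hj => by
    rw [expect_sum_comm, ← add_sum_erase s _ hj, ← expect_perm_apply (fun i => ‖a i‖ ^ 2) j]
    simp only [real_inner_self_eq_norm_sq]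
    exact add_le_of_nonpos_right
      (sum_nonpos fun k hk => expect_perm_inner_nonpos ha (ne_of_mem_erase hk).symm)
  simp only [hexpand]
  rw [expect_sum_comm, ← nsmul_eq_mul]
  exact sum_le_card_nsmul s _ _ hrow

lemma sum_fin_val_le (n : ℕ) : ∑ i : Fin n, (i : ℝ) ≤ (n : ℝ) ^ 2 / 2 := by
  rw [Fin.sum_univ_eq_sum_range (fun i => (i : ℝ))]
  induction n with
  | zero => simp
  | succ n ih =>
    rw [sum_range_succ]
    push_cast
    linarith

/-- The sum of the norms of the partial sums `∑ j < i, a j`, which measures how far a path with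
increments `a` strays from its starting point. -/
noncomputable def sumNormPrefix {E : Type*} [NormedAddCommGroup E] {n : ℕ} (a : Fin n → E) : ℝ :=
  ∑ i, ‖∑ j ∈ Iio i, a j‖

lemma expect_perm_sumNormPrefix_sq_le {n : ℕ} {a : Fin n → E} (ha : ∑ i, a i = 0) :
    𝔼 τ : Equiv.Perm (Fin n), sumNormPrefix (fun j => a (τ j)) ^ 2
      ≤ (n : ℝ) ^ 3 / 2 * 𝔼 i, ‖a i‖ ^ 2 := by
  have : 0 ≤ 𝔼 i, ‖a i‖ ^ 2 := expect_nonneg fun _ _ => by positivity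
  calc 𝔼 τ : Equiv.Perm (Fin n), sumNormPrefix (fun j => a (τ j)) ^ 2
      ≤ 𝔼 τ : Equiv.Perm (Fin n), (n : ℝ) * ∑ i : Fin n, ‖∑ j ∈ Iio i, a (τ j)‖ ^ 2 :=
        expect_le_expect fun τ _ => by
          simpa [sumNormPrefix] using sq_sum_le_card_mul_sum_sq (s := (univ : Finset (Fin n)))
            (f := fun i => ‖∑ j ∈ Iio i, a (τ j)‖)
    _ = n * ∑ i : Fin n, 𝔼 τ : Equiv.Perm (Fin n), ‖∑ j ∈ Iio i, a (τ j)‖ ^ 2 := by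
        rw [← mul_expect, expect_sum_comm]
    _ ≤ n * ∑ i : Fin n, (i : ℝ) * 𝔼 i, ‖a i‖ ^ 2 := by
        gcongr with i
        simpa using expect_perm_norm_sum_sq_le ha (Iio i)
    _ ≤ n * ((n : ℝ) ^ 2 / 2 * 𝔼 i, ‖a i‖ ^ 2) := by
        rw [← sum_mul]
        gcongr
        exact sum_fin_val_le n
    _ = (n : ℝ) ^ 3 / 2 * 𝔼 i, ‖a i‖ ^ 2 := by ring

end Sampling

section Inequalities

variable {E : Type*} [NormedAddCommGroup E] [InnerProductSpace ℝ E]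

lemma mul_norm_le_norm_of_le_inner {x v : E} {m : ℝ} (h : m * ‖x‖ ^ 2 ≤ ⟪v, x⟫) :
    m * ‖x‖ ≤ ‖v‖ := by
  rcases (norm_nonneg x).eq_or_lt with hx | hx
  · simp [← hx]
  · refine le_of_mul_le_mul_right ?_ hx
    linarith [real_inner_le_norm v x]

lemma norm_sub_smul_le_of_le_inner {x v : E} {h m L : ℝ} (hh : 0 ≤ h) (hv : ‖v‖ ≤ L * ‖x‖)
    (hvx : m * ‖x‖ ^ 2 ≤ ⟪v, x⟫) :
    ‖x - h • v‖ ≤ (1 - h * m + (h * L) ^ 2 / 2) * ‖x‖ := by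
  rcases (norm_nonneg x).eq_or_lt with hx | hx
  · have hx0 : x = 0 := norm_eq_zero.1 hx.symm
    have hv0 : v = 0 := by simpa [hx0] using hv
    simp [hx0, hv0]
  · have hsq : ‖x - h • v‖ ^ 2 ≤ (1 - 2 * (h * m) + (h * L) ^ 2) * ‖x‖ ^ 2 := by
      have hv2 : h ^ 2 * ‖v‖ ^ 2 ≤ h ^ 2 * (L * ‖x‖) ^ 2 := by gcongr
      have hvx' : h * (m * ‖x‖ ^ 2) ≤ h * ⟪v, x⟫ := by gcongr
      rw [norm_sub_sq_real, inner_smul_right, norm_smul, Real.norm_of_nonneg hh, real_inner_comm]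
      linarith
    -- `2 ‖x - h v‖ ‖x‖ ≤ ‖x - h v‖² + ‖x‖²` avoids taking a square root in `hsq`.
    refine le_of_mul_le_mul_right ?_ hx
    linarith [two_mul_le_add_sq ‖x - h • v‖ ‖x‖]

lemma le_of_mul_norm_sq_le_inner {x v : E} {m L : ℝ} (hv0 : v ≠ 0) (hv : ‖v‖ ≤ L * ‖x‖)
    (hvx : m * ‖x‖ ^ 2 ≤ ⟪v, x⟫) : m ≤ L := by
  have hx : 0 < ‖x‖ := norm_pos_iff.2 fun h => hv0 (by simpa [h] using hv)
  exact le_of_mul_le_mul_right ((mul_norm_le_norm_of_le_inner hvx).trans hv) hx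

lemma add_sq_le_div_add_div {a b θ : ℝ} (hθ : 0 < θ) (hθ' : θ < 1) :
    (a + b) ^ 2 ≤ a ^ 2 / (1 - θ) + b ^ 2 / θ := by
  have hθ1 : 0 < 1 - θ := sub_pos.2 hθ'
  rw [div_add_div _ _ hθ1.ne' hθ.ne', le_div_iff₀ (by positivity)]
  linarith [sq_nonneg (θ * a - (1 - θ) * b)]

lemma add_sq_le_of_contraction {x u b : ℝ} (hx : 0 < x) (hx' : x ≤ 1 / 5) :
    ((1 - 31 / 40 * x) * u + b) ^ 2 ≤ (1 - x) * u ^ 2 + 2 / x * b ^ 2 := by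
  have hcoeff : (1 - 31 / 40 * x) ^ 2 / (1 - x / 2) ≤ 1 - x := by
    rw [div_le_iff₀ (by linarith)]
    nlinarith
  calc ((1 - 31 / 40 * x) * u + b) ^ 2
      ≤ ((1 - 31 / 40 * x) * u) ^ 2 / (1 - x / 2) + b ^ 2 / (x / 2) :=
        add_sq_le_div_add_div (by positivity) (by linarith)
    _ = (1 - 31 / 40 * x) ^ 2 / (1 - x / 2) * u ^ 2 + 2 / x * b ^ 2 := by
        rw [mul_pow, mul_div_right_comm, div_div_eq_mul_div]
        ring
    _ ≤ (1 - x) * u ^ 2 + 2 / x * b ^ 2 := by gcongr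

lemma exp_neg_min_le_add (a b : ℝ) :
    Real.exp (-min a b) ≤ Real.exp (-a) + Real.exp (-b) := by
  rcases min_choice a b with h | h <;> rw [h] <;> linarith [Real.exp_pos (-a), Real.exp_pos (-b)]

end Inequalities

section Epoch

open Finset

variable {E : Type*} [NormedAddCommGroup E] {n : ℕ} {ω : Fin n → E → E} {l μ α : ℝ}

lemma norm_sum_sub_sum_le_of_lipschitz
    (hlip : ∀ (i : Fin n) (z₁ z₂ : E), ‖ω i z₁ - ω i z₂‖ ≤ l * ‖z₁ - z₂‖) (z₁ z₂ : E) :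
    ‖∑ i, ω i z₁ - ∑ i, ω i z₂‖ ≤ n * l * ‖z₁ - z₂‖ := by
  rw [← sum_sub_distrib]
  refine (norm_sum_le_of_le _ fun i _ => hlip i z₁ z₂).trans_eq ?_
  simp [mul_assoc]

section NormedSpace

variable [NormedSpace ℝ E]

lemma gdaStep_eq_sub_sum_filter (ω : Fin n → E → E) (α : ℝ) (τ : Equiv.Perm (Fin n)) (z : E)
    {i : ℕ} (hi : i ≤ n) :
    gdaStep ω α τ z i = z - α • ∑ j ∈ {j : Fin n | (j : ℕ) < i}, ω (τ j) (gdaStep ω α τ z j) := by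
  induction i with
  | zero => simp [gdaStep]
  | succ i ih =>
    have hfilter : univ.filter (fun j : Fin n => (j : ℕ) < i + 1)
        = insert ⟨i, hi⟩ (univ.filter fun j : Fin n => (j : ℕ) < i) := by
      ext j
      simp only [mem_filter, mem_univ, true_and, mem_insert, Fin.ext_iff]
      omega
    have hstep : gdaStep ω α τ z (i + 1)
        = gdaStep ω α τ z i - α • ω (τ ⟨i, hi⟩) (gdaStep ω α τ z i) := by
      simp [gdaStep, Nat.lt_of_succ_le hi]
    rw [hstep, hfilter, sum_insert (by simp), smul_add]
    nth_rewrite 1 [ih (Nat.le_of_succ_le hi)]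
    abel

lemma gdaStep_val (ω : Fin n → E → E) (α : ℝ) (τ : Equiv.Perm (Fin n)) (z : E) (i : Fin n) :
    gdaStep ω α τ z i = z - α • ∑ j ∈ Iio i, ω (τ j) (gdaStep ω α τ z j) := by
  rw [gdaStep_eq_sub_sum_filter ω α τ z i.2.le]
  congr 3
  ext j
  simp

lemma gdaStep_self (ω : Fin n → E → E) (α : ℝ) (τ : Equiv.Perm (Fin n)) (z : E) :
    gdaStep ω α τ z n = z - α • ∑ j, ω (τ j) (gdaStep ω α τ z j) := by
  simpa using gdaStep_eq_sub_sum_filter ω α τ z le_rfl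

lemma norm_gdaStep_val_sub_le (hα : 0 ≤ α)
    (hlip : ∀ (i : Fin n) (z₁ z₂ : E), ‖ω i z₁ - ω i z₂‖ ≤ l * ‖z₁ - z₂‖) (hl : 0 ≤ l)
    (τ : Equiv.Perm (Fin n)) (z zs : E) (i : Fin n) :
    ‖gdaStep ω α τ z i - z‖ ≤ α * (l * (∑ j : Fin n, ‖gdaStep ω α τ z j - z‖ + i * ‖z - zs‖)
      + ‖∑ j ∈ Iio i, ω (τ j) zs‖) := by
  have hsplit : gdaStep ω α τ z i - z
      = -(α • (∑ j ∈ Iio i, (ω (τ j) (gdaStep ω α τ z j) - ω (τ j) zs)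
        + ∑ j ∈ Iio i, ω (τ j) zs)) := by
    rw [← sum_add_distrib, gdaStep_val ω α τ z i]
    simp
  rw [hsplit, norm_neg, norm_smul, Real.norm_of_nonneg hα]
  gcongr
  refine (norm_add_le _ _).trans (add_le_add_left ?_ _)
  calc ‖∑ j ∈ Iio i, (ω (τ j) (gdaStep ω α τ z j) - ω (τ j) zs)‖
      ≤ ∑ j ∈ Iio i, l * (‖gdaStep ω α τ z j - z‖ + ‖z - zs‖) :=
        norm_sum_le_of_le _ fun j _ => (hlip _ _ _).trans <| by
          gcongr
          exact norm_sub_le_norm_sub_add_norm_sub _ _ _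
    _ = l * (∑ j ∈ Iio i, ‖gdaStep ω α τ z j - z‖ + i * ‖z - zs‖) := by
        rw [← mul_sum, sum_add_distrib, sum_const, Fin.card_Iio, nsmul_eq_mul]
    _ ≤ l * (∑ j : Fin n, ‖gdaStep ω α τ z j - z‖ + i * ‖z - zs‖) := by
        gcongr
        exact subset_univ _

lemma sum_norm_gdaStep_val_sub_le (hα : 0 ≤ α)
    (hlip : ∀ (i : Fin n) (z₁ z₂ : E), ‖ω i z₁ - ω i z₂‖ ≤ l * ‖z₁ - z₂‖) (hl : 0 ≤ l)
    (τ : Equiv.Perm (Fin n)) (z zs : E) :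
    (1 - n * α * l) * ∑ i : Fin n, ‖gdaStep ω α τ z i - z‖
      ≤ α * (l * (n ^ 2 / 2 * ‖z - zs‖) + sumNormPrefix fun j => ω (τ j) zs) := by
  set D := ∑ i : Fin n, ‖gdaStep ω α τ z i - z‖
  have hD : D ≤ α * (l * (n * D + n ^ 2 / 2 * ‖z - zs‖) + sumNormPrefix fun j => ω (τ j) zs) :=
    calc D ≤ ∑ i : Fin n, α * (l * (D + i * ‖z - zs‖) + ‖∑ j ∈ Iio i, ω (τ j) zs‖) :=
          sum_le_sum fun i _ => norm_gdaStep_val_sub_le hα hlip hl τ z zs i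
      _ = α * (l * (n * D + (∑ i : Fin n, (i : ℝ)) * ‖z - zs‖)
            + sumNormPrefix fun j => ω (τ j) zs) := by
          rw [← mul_sum, sum_add_distrib, ← mul_sum, sum_add_distrib, ← sum_mul]
          simp [sumNormPrefix]
      _ ≤ _ := by
          gcongr
          exact sum_fin_val_le n
  linarith

lemma norm_gdaStep_self_sub_le (hα : 0 ≤ α)
    (hlip : ∀ (i : Fin n) (z₁ z₂ : E), ‖ω i z₁ - ω i z₂‖ ≤ l * ‖z₁ - z₂‖)
    (τ : Equiv.Perm (Fin n)) (z zs : E) :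
    ‖gdaStep ω α τ z n - zs‖
      ≤ ‖z - zs - α • ∑ i, ω i z‖ + α * (l * ∑ i : Fin n, ‖gdaStep ω α τ z i - z‖) := by
  have hsplit : gdaStep ω α τ z n - zs = (z - zs - α • ∑ i, ω i z)
      - α • ∑ j, (ω (τ j) (gdaStep ω α τ z j) - ω (τ j) z) := by
    rw [gdaStep_self, sum_sub_distrib, Equiv.sum_comp τ fun i => ω i z, smul_sub]
    abel
  have hdrift : ‖∑ j, (ω (τ j) (gdaStep ω α τ z j) - ω (τ j) z)‖
      ≤ l * ∑ i : Fin n, ‖gdaStep ω α τ z i - z‖ := by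
    rw [mul_sum]
    exact norm_sum_le_of_le _ fun j _ => hlip _ _ _
  rw [hsplit]
  refine (norm_sub_le _ _).trans (add_le_add_right ?_ _)
  rw [norm_smul, Real.norm_of_nonneg hα]
  gcongr

end NormedSpace

variable [InnerProductSpace ℝ E] {zs : E}

lemma norm_gdaStep_self_sub_le_of_strongMonotone (hμ : 0 < μ) (hμl : μ ≤ l) (hα : 0 < α)
    (hstep : n * α * l ^ 2 ≤ μ / 5)
    (hlip : ∀ (i : Fin n) (z₁ z₂ : E), ‖ω i z₁ - ω i z₂‖ ≤ l * ‖z₁ - z₂‖)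
    (hzs : ∑ i, ω i zs = 0) {z : E}
    (hmono : n * μ * ‖z - zs‖ ^ 2 ≤ ⟪∑ i, ω i z, z - zs⟫) (τ : Equiv.Perm (Fin n)) :
    ‖gdaStep ω α τ z n - zs‖ ≤ (1 - 31 / 40 * (n * α * μ)) * ‖z - zs‖
      + 5 / 4 * α ^ 2 * l * sumNormPrefix fun j => ω (τ j) zs := by
  have hl : 0 < l := hμ.trans_le hμl
  have hnαl : n * α * l ≤ 1 / 5 := le_of_mul_le_mul_right (by linarith) hl
  have hlipSum : ‖∑ i, ω i z‖ ≤ n * l * ‖z - zs‖ := by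
    simpa [hzs] using norm_sum_sub_sum_le_of_lipschitz hlip z zs
  have hcontr := norm_sub_smul_le_of_le_inner hα.le hlipSum hmono
  set D := ∑ i : Fin n, ‖gdaStep ω α τ z i - z‖
  set P := sumNormPrefix fun j => ω (τ j) zs
  have hdrift : D ≤ 5 / 4 * (α * (l * (n ^ 2 / 2 * ‖z - zs‖) + P)) := by
    have hD : (4 / 5) * D ≤ (1 - n * α * l) * D := by
      gcongr
      linarith
    linarith [sum_norm_gdaStep_val_sub_le hα.le hlip hl.le τ z zs]
  have hquad : (n * α * l) ^ 2 * ‖z - zs‖ ≤ n * α * μ / 5 * ‖z - zs‖ := by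
    gcongr
    calc (n * α * l) ^ 2 = n * α * (n * α * l ^ 2) := by ring
      _ ≤ n * α * (μ / 5) := by gcongr
      _ = n * α * μ / 5 := by ring
  calc ‖gdaStep ω α τ z n - zs‖
      ≤ ‖z - zs - α • ∑ i, ω i z‖ + α * (l * D) := norm_gdaStep_self_sub_le hα.le hlip τ z zs
    _ ≤ (1 - α * (n * μ) + (α * (n * l)) ^ 2 / 2) * ‖z - zs‖
          + α * (l * (5 / 4 * (α * (l * (n ^ 2 / 2 * ‖z - zs‖) + P)))) := by gcongr
    -- By `hquad` the quadratic terms cost `1 / 10` and `1 / 8`; `1 - 1 / 10 - 1 / 8 = 31 / 40`.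
    _ ≤ (1 - 31 / 40 * (n * α * μ)) * ‖z - zs‖ + 5 / 4 * α ^ 2 * l * P := by linarith

lemma expect_norm_gdaStep_self_sub_sq_le (hn : 0 < n) (hμ : 0 < μ) (hμl : μ ≤ l) (hα : 0 < α)
    (hstep : n * α * l ^ 2 ≤ μ / 5)
    (hlip : ∀ (i : Fin n) (z₁ z₂ : E), ‖ω i z₁ - ω i z₂‖ ≤ l * ‖z₁ - z₂‖)
    (hzs : ∑ i, ω i zs = 0) {z : E}
    (hmono : n * μ * ‖z - zs‖ ^ 2 ≤ ⟪∑ i, ω i z, z - zs⟫) :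
    𝔼 τ : Equiv.Perm (Fin n), ‖gdaStep ω α τ z n - zs‖ ^ 2
      ≤ (1 - n * α * μ) * ‖z - zs‖ ^ 2
        + n * α * μ * (25 / 16 * (α * l / μ) ^ 2 * n * 𝔼 i, ‖ω i zs‖ ^ 2) := by
  have hl : 0 < l := hμ.trans_le hμl
  have hx : n * α * μ ≤ 1 / 5 := by
    have : n * α * l ≤ 1 / 5 := le_of_mul_le_mul_right (by linarith) hl
    exact le_trans (by gcongr) this
  set P := fun τ : Equiv.Perm (Fin n) => sumNormPrefix fun j => ω (τ j) zs
  have hepoch (τ : Equiv.Perm (Fin n)) : ‖gdaStep ω α τ z n - zs‖ ^ 2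
      ≤ (1 - n * α * μ) * ‖z - zs‖ ^ 2 + 2 / (n * α * μ) * (5 / 4 * α ^ 2 * l * P τ) ^ 2 :=
    (pow_le_pow_left₀ (norm_nonneg _)
      (norm_gdaStep_self_sub_le_of_strongMonotone hμ hμl hα hstep hlip hzs hmono τ) 2).trans
      (add_sq_le_of_contraction (by positivity) hx)
  calc 𝔼 τ : Equiv.Perm (Fin n), ‖gdaStep ω α τ z n - zs‖ ^ 2
      ≤ 𝔼 τ, ((1 - n * α * μ) * ‖z - zs‖ ^ 2
          + 2 / (n * α * μ) * (5 / 4 * α ^ 2 * l * P τ) ^ 2) :=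
        expect_le_expect fun τ _ => hepoch τ
    _ = (1 - n * α * μ) * ‖z - zs‖ ^ 2
          + 2 / (n * α * μ) * ((5 / 4 * α ^ 2 * l) ^ 2 * 𝔼 τ, P τ ^ 2) := by
        simp only [mul_pow, expect_add_distrib, Fintype.expect_const, ← mul_expect]
    _ ≤ (1 - n * α * μ) * ‖z - zs‖ ^ 2 + 2 / (n * α * μ)
          * ((5 / 4 * α ^ 2 * l) ^ 2 * ((n : ℝ) ^ 3 / 2 * 𝔼 i, ‖ω i zs‖ ^ 2)) := by
        gcongr
        exact expect_perm_sumNormPrefix_sq_le (a := fun i => ω i zs) hzs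
    _ = _ := by
        generalize 𝔼 i, ‖ω i zs‖ ^ 2 = v
        field_simp
        ring

end Epoch

section Epochs

open Finset

lemma expect_fin_succ_pi_eq_expect_snoc {α M : Type*} [Fintype α] [AddCommMonoid M]
    [Module ℚ≥0 M] {m : ℕ} (f : (Fin (m + 1) → α) → M) :
    𝔼 τ, f τ = 𝔼 τ : Fin m → α, 𝔼 π : α, f (Fin.snoc τ π) := by
  rw [expect_comm, ← expect_product', univ_product_univ]
  exact (Fintype.expect_equiv (Fin.snocEquiv fun _ => α) _ _ fun _ => rfl).symm

variable {E : Type*} [NormedAddCommGroup E] [NormedSpace ℝ E] {n : ℕ}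

lemma expect_fin_pi_perm (n m : ℕ) (f : (Fin m → Equiv.Perm (Fin n)) → ℝ) :
    𝔼 τ, f τ = ((n.factorial : ℝ) ^ m)⁻¹ * ∑ τ, f τ := by
  rw [Fintype.expect_eq_sum_div_card, Fintype.card_fun, Fintype.card_perm, Fintype.card_fin,
    Fintype.card_fin, Nat.cast_pow, inv_mul_eq_div]

lemma gdaEpochs_congr (ω : Fin n → E → E) (α : ℝ) {τs τs' : ℕ → Equiv.Perm (Fin n)} (z0 : E)
    {m : ℕ} (h : ∀ k < m, τs k = τs' k) :
    gdaEpochs ω α τs z0 m = gdaEpochs ω α τs' z0 m := by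
  induction m with
  | zero => rfl
  | succ m ih =>
    simp only [gdaEpochs]
    rw [ih fun k hk => h k (hk.trans m.lt_succ_self), h m m.lt_succ_self]

/-- The output of GDA without replacement after `m` epochs driven by the permutations `τ`. As
`gdaEpochs` expects an infinite sequence, `τ` is padded with the identity, which never gets used. -/
noncomputable def gdaOutput (ω : Fin n → E → E) (α : ℝ) (z0 : E) {m : ℕ}
    (τ : Fin m → Equiv.Perm (Fin n)) : E :=
  gdaEpochs ω α (fun k => if h : k < m then τ ⟨k, h⟩ else 1) z0 m

lemma gdaOutput_snoc (ω : Fin n → E → E) (α : ℝ) (z0 : E) {m : ℕ}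
    (τ : Fin m → Equiv.Perm (Fin n)) (π : Equiv.Perm (Fin n)) :
    gdaOutput ω α z0 (Fin.snoc τ π : Fin (m + 1) → Equiv.Perm (Fin n))
      = gdaStep ω α π (gdaOutput ω α z0 τ) n := by
  simp only [gdaOutput, gdaEpochs]
  rw [gdaEpochs_congr ω α (τs' := fun k => if h : k < m then τ ⟨k, h⟩ else 1) z0 fun k hk => ?_]
  · simp [Fin.snoc]
  · simp [Fin.snoc, hk, hk.trans m.lt_succ_self]

lemma expect_gdaOutput_le {ω : Fin n → E → E} {α q B : ℝ} {V : E → ℝ} (hq : 0 ≤ q)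
    (hV : ∀ z, 𝔼 π : Equiv.Perm (Fin n), V (gdaStep ω α π z n) ≤ q * V z + (1 - q) * B)
    (z0 : E) (m : ℕ) :
    𝔼 τ : Fin m → Equiv.Perm (Fin n), V (gdaOutput ω α z0 τ) ≤ q ^ m * V z0 + (1 - q ^ m) * B := by
  induction m with
  | zero => simp [gdaOutput, gdaEpochs]
  | succ m ih =>
    calc 𝔼 τ : Fin (m + 1) → Equiv.Perm (Fin n), V (gdaOutput ω α z0 τ)
        = 𝔼 τ : Fin m → Equiv.Perm (Fin n), 𝔼 π : Equiv.Perm (Fin n),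
            V (gdaStep ω α π (gdaOutput ω α z0 τ) n) := by
          simp only [expect_fin_succ_pi_eq_expect_snoc, gdaOutput_snoc]
      _ ≤ 𝔼 τ : Fin m → Equiv.Perm (Fin n), (q * V (gdaOutput ω α z0 τ) + (1 - q) * B) :=
          expect_le_expect fun τ _ => hV _
      _ = q * 𝔼 τ : Fin m → Equiv.Perm (Fin n), V (gdaOutput ω α z0 τ) + (1 - q) * B := by
          rw [expect_add_distrib, ← mul_expect, Fintype.expect_const]
      _ ≤ q * (q ^ m * V z0 + (1 - q ^ m) * B) + (1 - q) * B := by gcongr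
      _ = q ^ (m + 1) * V z0 + (1 - q ^ (m + 1)) * B := by ring

end Epochs

section RandomReshuffling

open Finset

variable {E : Type*} [NormedAddCommGroup E] [InnerProductSpace ℝ E] {n : ℕ}
  {ω : Fin n → E → E} {l μ α : ℝ} {zs : E}

lemma expect_norm_gdaOutput_sub_sq_le (hn : 0 < n) (hμ : 0 < μ) (hμl : μ ≤ l) (hα : 0 < α)
    (hstep : n * α * l ^ 2 ≤ μ / 5)
    (hlip : ∀ (i : Fin n) (z₁ z₂ : E), ‖ω i z₁ - ω i z₂‖ ≤ l * ‖z₁ - z₂‖)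
    (hzs : ∑ i, ω i zs = 0)
    (hmono : ∀ z, n * μ * ‖z - zs‖ ^ 2 ≤ ⟪∑ i, ω i z, z - zs⟫) (z0 : E) (m : ℕ) :
    𝔼 τ : Fin m → Equiv.Perm (Fin n), ‖gdaOutput ω α z0 τ - zs‖ ^ 2
      ≤ Real.exp (-(m * (n * α * μ))) * ‖z0 - zs‖ ^ 2
        + 25 / 16 * (α * l / μ) ^ 2 * n * 𝔼 i, ‖ω i zs‖ ^ 2 := by
  have hq : 0 ≤ 1 - n * α * μ := by
    have : n * α * μ * μ ≤ 1 * μ := by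
      calc n * α * μ * μ = n * α * μ ^ 2 := by ring
        _ ≤ n * α * l ^ 2 := by gcongr
        _ ≤ 1 * μ := by linarith
    linarith [le_of_mul_le_mul_right this hμ]
  have : 0 ≤ 𝔼 i, ‖ω i zs‖ ^ 2 := expect_nonneg fun _ _ => by positivity
  set B := 25 / 16 * (α * l / μ) ^ 2 * n * 𝔼 i, ‖ω i zs‖ ^ 2
  have hB : 0 ≤ B := by positivity
  have hpow : (1 - n * α * μ) ^ m ≤ Real.exp (-(m * (n * α * μ))) := by
    rw [← mul_neg, Real.exp_nat_mul]
    gcongr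
    exact Real.one_sub_le_exp_neg _
  refine (expect_gdaOutput_le (V := fun z => ‖z - zs‖ ^ 2) (B := B) hq (fun z => ?_) z0 m).trans ?_
  · rw [sub_sub_cancel]
    exact expect_norm_gdaStep_self_sub_sq_le hn hμ hμl hα hstep hlip hzs (hmono z)
  · gcongr
    exact mul_le_of_le_one_left hB (sub_le_self _ (by positivity))

lemma mul_min_stepSize {n K : ℝ} (hn : 0 < n) (hK : 0 < K) (hμ : 0 < μ) (hl : 0 < l) (L : ℝ) :
    K * (n * min (μ / (5 * n * l ^ 2)) (2 / (μ * n * K) * L) * μ)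
      = min (K / (5 * (l / μ) ^ 2)) (2 * L) := by
  rw [mul_min_of_nonneg _ _ hn.le, min_mul_of_nonneg _ _ hμ.le, mul_min_of_nonneg _ _ hK.le]
  congr 1 <;> field_simp

lemma exp_neg_two_mul_log_mul_sq_le {d G s : ℝ} (hμ : 0 < μ) (hd : 0 ≤ d) (hs : 0 < s)
    (hG : 0 < G) (hdG : μ * d ≤ G) :
    Real.exp (-(2 * Real.log (G * s / μ))) * d ^ 2 ≤ 1 / s ^ 2 := by
  have hexp : Real.exp (-(2 * Real.log (G * s / μ))) = ((G * s / μ) ^ 2)⁻¹ := by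
    rw [Real.exp_neg, ← Nat.cast_two, ← Real.log_pow, Real.exp_log (by positivity)]
  have hsq : d ^ 2 ≤ (G / μ) ^ 2 := by
    gcongr
    rwa [le_div_iff₀' hμ]
  rw [hexp, inv_mul_le_iff₀ (by positivity)]
  calc d ^ 2 ≤ (G / μ) ^ 2 := hsq
    _ = (G * s / μ) ^ 2 * (1 / s ^ 2) := by field_simp

lemma noise_le_of_le_stepSize {n K L v : ℝ} (hn : 0 < n) (hK : 0 < K) (hμ : 0 < μ) (hl : 0 < l)
    (hα : 0 ≤ α) (hv : 0 ≤ v) (hL : 1 ≤ L) (hαL : α ≤ 2 / (μ * n * K) * L) :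
    25 / 16 * (α * l / μ) ^ 2 * n * v ≤ 8 * (l / μ) ^ 2 * v * L ^ 3 / (μ ^ 2 * n * K ^ 2) :=
  calc 25 / 16 * (α * l / μ) ^ 2 * n * v
      ≤ 25 / 16 * (2 / (μ * n * K) * L * l / μ) ^ 2 * n * v := by gcongr
    _ = 25 / 4 * (l / μ) ^ 2 * v * L ^ 2 / (μ ^ 2 * n * K ^ 2) := by
        field_simp
        ring
    _ ≤ 8 * (l / μ) ^ 2 * v * L ^ 3 / (μ ^ 2 * n * K ^ 2) := by
        gcongr
        · norm_num
        · norm_num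

lemma le_of_lipschitz_of_le_inner_sum {z : E}
    (hlip : ∀ (i : Fin n) (z₁ z₂ : E), ‖ω i z₁ - ω i z₂‖ ≤ l * ‖z₁ - z₂‖)
    (hzs : ∑ i, ω i zs = 0) (hmono : n * μ * ‖z - zs‖ ^ 2 ≤ ⟪∑ i, ω i z, z - zs⟫)
    (hz : ∑ i, ω i z ≠ 0) : μ ≤ l := by
  have hn : 0 < n := Nat.pos_of_ne_zero fun h => hz (by subst h; simp)
  have hlipSum : ‖∑ i, ω i z‖ ≤ n * l * ‖z - zs‖ := by
    simpa [hzs] using norm_sum_sub_sum_le_of_lipschitz hlip z zs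
  exact le_of_mul_le_mul_left (le_of_mul_norm_sq_le_inner hz hlipSum hmono) (Nat.cast_pos.2 hn)

lemma expect_norm_gdaOutput_sub_sq_le_of_eq_min {K : ℕ} {z0 : E} {G : ℝ} (hn : 0 < n)
    (hK : 0 < K) (hμ : 0 < μ) (hμl : μ ≤ l)
    (hlip : ∀ (i : Fin n) (z₁ z₂ : E), ‖ω i z₁ - ω i z₂‖ ≤ l * ‖z₁ - z₂‖)
    (hzs : ∑ i, ω i zs = 0)
    (hmono : ∀ z, n * μ * ‖z - zs‖ ^ 2 ≤ ⟪∑ i, ω i z, z - zs⟫)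
    (hG : 0 < G) (hdG : μ * ‖z0 - zs‖ ≤ G) (hL : 1 ≤ Real.log (G * Real.sqrt n * K / μ))
    (hα : α = min (μ / (5 * n * l ^ 2)) (2 / (μ * n * K) * Real.log (G * Real.sqrt n * K / μ))) :
    𝔼 τ : Fin K → Equiv.Perm (Fin n), ‖gdaOutput ω α z0 τ - zs‖ ^ 2
      ≤ Real.exp (-(K / (5 * (l / μ) ^ 2))) * ‖z0 - zs‖ ^ 2
        + (μ ^ 2 + 8 * (l / μ) ^ 2 * (𝔼 i, ‖ω i zs‖ ^ 2) * Real.log (G * Real.sqrt n * K / μ) ^ 3)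
          / (μ ^ 2 * n * K ^ 2) := by
  have hl : 0 < l := hμ.trans_le hμl
  have hn' : (0 : ℝ) < n := Nat.cast_pos.2 hn
  have hK' : (0 : ℝ) < K := Nat.cast_pos.2 hK
  have hbias : Real.exp (-(2 * Real.log (G * Real.sqrt n * K / μ))) * ‖z0 - zs‖ ^ 2
      ≤ μ ^ 2 / (μ ^ 2 * n * K ^ 2) := by
    have hs : μ ^ 2 / (μ ^ 2 * n * K ^ 2) = 1 / (Real.sqrt n * K) ^ 2 := by
      rw [mul_pow, Real.sq_sqrt hn'.le]
      field_simp
    rw [mul_assoc G, hs]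
    exact exp_neg_two_mul_log_mul_sq_le hμ (norm_nonneg _) (by positivity) hG hdG
  set L := Real.log (G * Real.sqrt n * K / μ)
  have hα0 : 0 < α := hα ▸ lt_min (by positivity) (by positivity)
  have hstep : n * α * l ^ 2 ≤ μ / 5 :=
    calc n * α * l ^ 2 ≤ n * (μ / (5 * n * l ^ 2)) * l ^ 2 := by
          gcongr
          exact hα ▸ min_le_left _ _
      _ = μ / 5 := by field_simp
  have hvar : 0 ≤ 𝔼 i, ‖ω i zs‖ ^ 2 := expect_nonneg fun _ _ => by positivity
  have hnoise := noise_le_of_le_stepSize hn' hK' hμ hl hα0.le hvar hL (hα ▸ min_le_right _ _)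
  rw [add_div, ← add_assoc]
  refine (expect_norm_gdaOutput_sub_sq_le hn hμ hμl hα0 hstep hlip hzs hmono z0 K).trans
    (add_le_add ?_ hnoise)
  calc Real.exp (-(K * (n * α * μ))) * ‖z0 - zs‖ ^ 2
      ≤ (Real.exp (-(K / (5 * (l / μ) ^ 2))) + Real.exp (-(2 * L))) * ‖z0 - zs‖ ^ 2 := by
        rw [hα, mul_min_stepSize hn' hK' hμ hl]
        gcongr
        exact exp_neg_min_le_add _ _
    _ ≤ Real.exp (-(K / (5 * (l / μ) ^ 2))) * ‖z0 - zs‖ ^ 2 + μ ^ 2 / (μ ^ 2 * n * K ^ 2) := by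
        rw [add_mul]
        gcongr

end RandomReshuffling

theorem stmt_19_general
    {E : Type*} [NormedAddCommGroup E] [InnerProductSpace ℝ E]
    (n : ℕ) (ω : Fin n → E → E) (l μ : ℝ) (hμ : 0 < μ)
    (hlip : ∀ (i : Fin n) (z₁ z₂ : E), ‖ω i z₁ - ω i z₂‖ ≤ l * ‖z₁ - z₂‖)
    (ν : E → E) (hν : ∀ z, ν z = (n : ℝ)⁻¹ • ∑ i, ω i z)
    (zs : E) (hzs : ν zs = 0) (hmono : ∀ z, ⟪ν z, z - zs⟫ ≥ μ * ‖z - zs‖ ^ 2)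
    (σ2 : ℝ) (hσ2 : σ2 = (n : ℝ)⁻¹ * ∑ i, ‖ω i zs‖ ^ 2)
    (z0 : E) (K : ℕ)
    (hbig : ‖ν z0‖ * Real.sqrt n * K ≥ Real.exp 1 * μ)
    (α : ℝ)
    (hα : α = min (μ / (5 * n * l ^ 2))
        (2 / (μ * n * K) * Real.log (‖ν z0‖ * Real.sqrt n * K / μ))) :
    ((n.factorial : ℝ) ^ K)⁻¹ *
        ∑ τ : Fin K → Equiv.Perm (Fin n),
          ‖gdaEpochs ω α (fun k => if h : k < K then τ ⟨k, h⟩ else 1) z0 K - zs‖ ^ 2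
      ≤ 2 * Real.exp (-((K : ℝ) / (5 * (l / μ) ^ 2))) * ‖z0 - zs‖ ^ 2 +
          (2 * μ ^ 2 + 8 * (l / μ) ^ 2 * σ2 *
              Real.log (‖ν z0‖ * Real.sqrt n * K / μ) ^ 3) /
            (μ ^ 2 * n * K ^ 2) := by
  have hpos : 0 < ‖ν z0‖ * Real.sqrt n * K := lt_of_lt_of_le (by positivity) hbig
  have hn : 0 < n := Nat.pos_of_ne_zero fun h => by simp [h] at hpos
  have hK : 0 < K := Nat.pos_of_ne_zero fun h => by simp [h] at hpos
  have hG : 0 < ‖ν z0‖ := (norm_nonneg _).lt_of_ne fun h => by simp [← h] at hpos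
  have hsum (z : E) : ∑ i, ω i z = (n : ℝ) • ν z := by
    rw [hν, smul_inv_smul₀ (by positivity)]
  have hsum0 : ∑ i, ω i zs = 0 := by rw [hsum, hzs, smul_zero]
  have hmonoSum (z : E) : n * μ * ‖z - zs‖ ^ 2 ≤ ⟪∑ i, ω i z, z - zs⟫ := by
    rw [hsum, real_inner_smul_left, mul_assoc]
    gcongr
    exact hmono z
  have hμl : μ ≤ l := le_of_lipschitz_of_le_inner_sum hlip hsum0 (hmonoSum z0) <| by
    rw [hsum]
    exact smul_ne_zero (by positivity) (norm_pos_iff.1 hG)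
  have hL : 1 ≤ Real.log (‖ν z0‖ * Real.sqrt n * K / μ) := by
    rwa [Real.le_log_iff_exp_le (by positivity), le_div_iff₀ hμ]
  have hvar : 𝔼 i, ‖ω i zs‖ ^ 2 = σ2 := by
    rw [Fintype.expect_eq_sum_div_card, Fintype.card_fin, hσ2, inv_mul_eq_div]
  rw [← expect_fin_pi_perm, ← hvar]
  refine (expect_norm_gdaOutput_sub_sq_le_of_eq_min hn hK hμ hμl hlip hsum0 hmonoSum hG
    (mul_norm_le_norm_of_le_inner (hmono z0)) hL hα).trans ?_
  gcongr
  · exact le_mul_of_one_le_left (Real.exp_pos _).le one_le_two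
  · exact le_mul_of_one_le_left (sq_nonneg μ) one_le_two

/-- GDA with Random Reshuffling, with the tuned step-size
`α = min{μ/(5nl²), (2/(μnK))·log(‖ν(z₀)‖√n·K/μ)}`: averaging over all `(n!)^K` tuples of
permutations,
`E‖z^{K+1}₀ − z*‖² ≤ 2e^{−K/(5κ²)}‖z₀ − z*‖² + (2μ² + 8κ²σ*²log³(‖ν(z₀)‖√n·K/μ))/(μ²nK²)`,
where `κ = l/μ`. -/
theorem stmt_19
    {E : Type*} [NormedAddCommGroup E] [InnerProductSpace ℝ E] [FiniteDimensional ℝ E]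
    (n : ℕ) (hn : 1 ≤ n) (ω : Fin n → E → E) (l μ : ℝ) (hμ : 0 < μ) (hμl : μ ≤ l)
    (hlip : ∀ (i : Fin n) (z₁ z₂ : E), ‖ω i z₁ - ω i z₂‖ ≤ l * ‖z₁ - z₂‖)
    (ν : E → E) (hν : ∀ z, ν z = (n : ℝ)⁻¹ • ∑ i, ω i z)
    (hmono : ∀ z₁ z₂, ⟪ν z₁ - ν z₂, z₁ - z₂⟫ ≥ μ * ‖z₁ - z₂‖ ^ 2)
    (zs : E) (hzs : ν zs = 0)
    (σ2 : ℝ) (hσ2 : σ2 = (n : ℝ)⁻¹ * ∑ i, ‖ω i zs‖ ^ 2)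
    (z0 : E) (K : ℕ) (hK : 1 ≤ K)
    (hbig : ‖ν z0‖ * Real.sqrt n * K ≥ Real.exp 1 * μ)
    (α : ℝ)
    (hα : α = min (μ / (5 * n * l ^ 2))
        (2 / (μ * n * K) * Real.log (‖ν z0‖ * Real.sqrt n * K / μ))) :
    ((n.factorial : ℝ) ^ K)⁻¹ *
        ∑ τ : Fin K → Equiv.Perm (Fin n),
          ‖gdaEpochs ω α (fun k => if h : k < K then τ ⟨k, h⟩ else 1) z0 K - zs‖ ^ 2
      ≤ 2 * Real.exp (-((K : ℝ) / (5 * (l / μ) ^ 2))) * ‖z0 - zs‖ ^ 2 +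
          (2 * μ ^ 2 + 8 * (l / μ) ^ 2 * σ2 *
              Real.log (‖ν z0‖ * Real.sqrt n * K / μ) ^ 3) /
            (μ ^ 2 * n * K ^ 2) := by
  exact stmt_19_general n ω l μ hμ hlip ν hν zs hzs (fun z => by simpa [hzs] using hmono z zs)
    σ2 hσ2 z0 K hbig α hα
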